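/- Let L > 0 and define K(k) = ∫₀^{π/2} (1 − k² sin²θ)^{−1/2} dθ for k ∈ (0,1). Then the function g : (1/√2, 1) → ℝ given by g(k) = 16 K(k)² (2k² − 1)/L² is strictly increasing on (1/√2, 1), g(k) → 0 as k → (1/√2)⁺, and g(k) → +∞ as k → 1⁻; consequently g maps (1/√2, 1) bijectively onto (0, +∞). -/

import Mathlib

/-!
On `(1/√2, 1)` the factors `K(k)²` and `2k² - 1` of the frequency are positive and increasing, the
second one strictly and with limit `0` at `1/√2`. The blow-up at `k = 1` comes from
`K(k) ≥ artanh k`: since `k cos θ ≤ √(1 - k² sin² θ)`, the integrand of `K` dominates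
`k cos θ / (1 - k² sin² θ)`, which is the derivative of `artanh (k sin θ)`. The intermediate value
theorem then gives the range.
-/

open Set Filter Real
open scoped Topology

theorem bijOn_Ioo_Ioi_of_strictMonoOn {α β : Type*} [ConditionallyCompleteLinearOrder α]
    [TopologicalSpace α] [OrderTopology α] [DenselyOrdered α] [LinearOrder β] [TopologicalSpace β]
    [OrderClosedTopology β] {f : α → β} {a b : α} {c : β} (hab : a < b)
    (hmono : StrictMonoOn f (Ioo a b)) (hcont : ContinuousOn f (Ioo a b))
    (ha : Tendsto f (𝓝[>] a) (𝓝 c)) (hb : Tendsto f (𝓝[<] b) atTop) :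
    BijOn f (Ioo a b) (Ioi c) := by
  have : (𝓝[>] a).NeBot := nhdsGT_neBot_of_exists_gt ⟨b, hab⟩
  have : (𝓝[<] b).NeBot := nhdsLT_neBot_of_exists_lt ⟨a, hab⟩
  refine ⟨fun x hx ↦ ?_, hmono.injOn, ?_⟩
  · obtain ⟨y, hay, hyx⟩ := exists_between hx.1
    have hy : y ∈ Ioo a b := ⟨hay, hyx.trans hx.2⟩
    have hcy : c ≤ f y := by
      refine le_of_tendsto ha ?_
      filter_upwards [Ioo_mem_nhdsGT hay] with z hz
      exact (hmono ⟨hz.1, hz.2.trans hy.2⟩ hy hz.2).le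
    exact hcy.trans_lt (hmono hy hx hyx)
  · exact isPreconnected_Ioo.intermediate_value_Ioi
      (le_principal_iff.2 (Ioo_mem_nhdsGT hab)) (le_principal_iff.2 (Ioo_mem_nhdsLT hab))
      hcont ha hb

theorem hasDerivAt_artanh {x : ℝ} (hx : x ∈ Ioo (-1) 1) :
    HasDerivAt artanh (1 / (1 - x ^ 2)) x := by
  have hpos : 0 < 1 + x := by linarith [hx.1]
  have hpos' : 0 < 1 - x := by linarith [hx.2]
  have hquot : HasDerivAt (fun y : ℝ ↦ (1 + y) / (1 - y))
      ((1 * (1 - x) - (1 + x) * -1) / (1 - x) ^ 2) x :=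
    ((hasDerivAt_id x).const_add 1).div ((hasDerivAt_id x).const_sub 1) hpos'.ne'
  have hlog := (hquot.log (div_pos hpos hpos').ne').const_mul (1 / 2)
  refine (hlog.congr_deriv ?_).congr_of_eventuallyEq ?_
  · rw [show 1 - x ^ 2 = (1 + x) * (1 - x) by ring]
    field_simp
    ring
  · filter_upwards [Ioo_mem_nhds hx.1 hx.2] with y hy
    exact artanh_eq_half_log (Ioo_subset_Icc_self hy)

theorem tendsto_artanh_nhdsLT_one : Tendsto artanh (𝓝[<] 1) atTop := by
  refine tendsto_atTop.2 fun b ↦ ?_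
  filter_upwards [Ioo_mem_nhdsLT (tanh_lt_one b)] with x hx
  calc b = artanh (tanh b) := (artanh_tanh b).symm
    _ ≤ artanh x := artanh_le_artanh (neg_one_lt_tanh b) hx.2 hx.1.le

/-- The complete elliptic integral of the first kind `K(k)`, as a function of the modulus `k`
(not of the parameter `m = k²`). Values at `|k| ≥ 1` are junk: the integral diverges at `|k| = 1`,
and beyond that `√` is taken of negative numbers. -/
noncomputable def ellipticK (k : ℝ) : ℝ :=
  ∫ θ in 0..π / 2, 1 / √(1 - k ^ 2 * sin θ ^ 2)

section EllipticK

variable {k : ℝ}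

theorem one_sub_sq_mul_sin_sq_pos (hk : k ∈ Ioo (-1) 1) (θ : ℝ) :
    0 < 1 - k ^ 2 * sin θ ^ 2 := by
  have hk2 : k ^ 2 < 1 := (sq_lt_one_iff_abs_lt_one k).2 (abs_lt.2 hk)
  nlinarith [sin_sq_le_one θ, sq_nonneg k]

theorem continuous_ellipticK_integrand (hk : k ∈ Ioo (-1) 1) :
    Continuous fun θ : ℝ ↦ 1 / √(1 - k ^ 2 * sin θ ^ 2) :=
  continuous_const.div (by fun_prop) fun θ ↦ (sqrt_pos.2 (one_sub_sq_mul_sin_sq_pos hk θ)).ne'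

theorem ellipticK_pos (hk : k ∈ Ioo (-1) 1) : 0 < ellipticK k :=
  intervalIntegral.intervalIntegral_pos_of_pos
    ((continuous_ellipticK_integrand hk).intervalIntegrable _ _)
    (fun θ ↦ one_div_pos.2 (sqrt_pos.2 (one_sub_sq_mul_sin_sq_pos hk θ))) pi_div_two_pos

theorem monotoneOn_ellipticK : MonotoneOn ellipticK (Ico 0 1) := by
  intro a ha b hb hab
  have ha' : a ∈ Ioo (-1) 1 := ⟨neg_one_lt_zero.trans_le ha.1, ha.2⟩
  have hb' : b ∈ Ioo (-1) 1 := ⟨neg_one_lt_zero.trans_le hb.1, hb.2⟩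
  refine intervalIntegral.integral_mono pi_div_two_pos.le
    ((continuous_ellipticK_integrand ha').intervalIntegrable _ _)
    ((continuous_ellipticK_integrand hb').intervalIntegrable _ _) fun θ ↦ ?_
  have ha0 : 0 ≤ a := ha.1
  have hpos := sqrt_pos.2 (one_sub_sq_mul_sin_sq_pos hb' θ)
  dsimp only
  gcongr

theorem continuousOn_ellipticK : ContinuousOn ellipticK (Ioo (-1) 1) := by
  rw [continuousOn_iff_continuous_domRestrict]
  refine intervalIntegral.continuous_parametric_intervalIntegral_of_continuous'
    (f := fun (k : Ioo (-1 : ℝ) 1) θ ↦ 1 / √(1 - (k : ℝ) ^ 2 * sin θ ^ 2)) ?_ 0 (π / 2)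
  exact continuous_const.div (by fun_prop)
    fun p ↦ (sqrt_pos.2 (one_sub_sq_mul_sin_sq_pos p.1.2 p.2)).ne'

theorem hasDerivAt_artanh_mul_sin (hk : k ∈ Ioo (-1) 1) (θ : ℝ) :
    HasDerivAt (fun θ ↦ artanh (k * sin θ)) (k * cos θ / (1 - k ^ 2 * sin θ ^ 2)) θ := by
  have hmem : k * sin θ ∈ Ioo (-1) 1 := by
    rw [mem_Ioo, ← abs_lt, ← sq_lt_one_iff_abs_lt_one, mul_pow]
    exact sub_pos.1 (one_sub_sq_mul_sin_sq_pos hk θ)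
  refine ((hasDerivAt_artanh hmem).comp θ ((hasDerivAt_sin θ).const_mul k)).congr_deriv ?_
  rw [mul_pow, one_div_mul_eq_div]

theorem mul_cos_div_le_ellipticK_integrand (hk : k ∈ Ioo (-1) 1) (θ : ℝ) :
    k * cos θ / (1 - k ^ 2 * sin θ ^ 2) ≤ 1 / √(1 - k ^ 2 * sin θ ^ 2) := by
  have hpos := one_sub_sq_mul_sin_sq_pos hk θ
  have hk2 : k ^ 2 < 1 := (sq_lt_one_iff_abs_lt_one k).2 (abs_lt.2 hk)
  have hcos : k * cos θ ≤ √(1 - k ^ 2 * sin θ ^ 2) := by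
    refine le_sqrt_of_sq_le ?_
    rw [mul_pow, cos_sq']
    linarith
  calc k * cos θ / (1 - k ^ 2 * sin θ ^ 2)
      ≤ √(1 - k ^ 2 * sin θ ^ 2) / (1 - k ^ 2 * sin θ ^ 2) := by gcongr
    _ = 1 / √(1 - k ^ 2 * sin θ ^ 2) := sqrt_div_self'

theorem artanh_le_ellipticK (hk : k ∈ Ioo (-1) 1) : artanh k ≤ ellipticK k := by
  have hint : IntervalIntegrable (fun θ ↦ k * cos θ / (1 - k ^ 2 * sin θ ^ 2))
      MeasureTheory.volume 0 (π / 2) :=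
    (Continuous.div (by fun_prop) (by fun_prop)
      fun θ ↦ (one_sub_sq_mul_sin_sq_pos hk θ).ne').intervalIntegrable _ _
  calc artanh k = ∫ θ in 0..π / 2, k * cos θ / (1 - k ^ 2 * sin θ ^ 2) := by
        rw [intervalIntegral.integral_eq_sub_of_hasDerivAt
          (fun θ _ ↦ hasDerivAt_artanh_mul_sin hk θ) hint]
        simp
    _ ≤ ellipticK k := intervalIntegral.integral_mono pi_div_two_pos.le hint
        ((continuous_ellipticK_integrand hk).intervalIntegrable _ _)
        (mul_cos_div_le_ellipticK_integrand hk)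

theorem tendsto_ellipticK_nhdsLT_one : Tendsto ellipticK (𝓝[<] 1) atTop := by
  refine tendsto_atTop_mono' _ ?_ tendsto_artanh_nhdsLT_one
  filter_upwards [Ioo_mem_nhdsLT (by norm_num : (-1 : ℝ) < 1)] with k hk
  exact artanh_le_ellipticK hk

end EllipticK

/-- The frequency `ω` of the `L`-periodic cnoidal standing wave with modulus `k ∈ (1/√2, 1)` of the
cubic nonlinear Schrödinger equation. -/
noncomputable def cnoidalFrequency (L k : ℝ) : ℝ :=
  16 * ellipticK k ^ 2 * (2 * k ^ 2 - 1) / L ^ 2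

theorem one_div_sqrt_two_mem_Ioo : 1 / √2 ∈ Ioo (0 : ℝ) 1 :=
  ⟨by positivity, (div_lt_one (by positivity)).2 one_lt_sqrt_two⟩

theorem two_mul_one_div_sqrt_two_sq : 2 * (1 / √2) ^ 2 = 1 := by simp

theorem strictMonoOn_cnoidalFrequency {L : ℝ} (hL : L ≠ 0) :
    StrictMonoOn (cnoidalFrequency L) (Ico (1 / √2) 1) := by
  intro a ha b hb hab
  have hc : 0 < 1 / √2 := one_div_sqrt_two_mem_Ioo.1
  have ha0 : 0 < a := hc.trans_le ha.1
  have hb0 : 0 < b := hc.trans_le hb.1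
  have hKa : 0 < ellipticK a := ellipticK_pos ⟨by linarith, ha.2⟩
  have hKb : 0 < ellipticK b := ellipticK_pos ⟨by linarith, hb.2⟩
  have hK : ellipticK a ≤ ellipticK b :=
    monotoneOn_ellipticK ⟨ha0.le, ha.2⟩ ⟨hb0.le, hb.2⟩ hab.le
  have hfactor : 0 ≤ 2 * a ^ 2 - 1 := by
    rw [sub_nonneg, ← two_mul_one_div_sqrt_two_sq]
    have := ha.1
    gcongr
  calc cnoidalFrequency L a
      ≤ 16 * ellipticK b ^ 2 * (2 * a ^ 2 - 1) / L ^ 2 := by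
        unfold cnoidalFrequency
        gcongr
    _ < cnoidalFrequency L b := by
        unfold cnoidalFrequency
        gcongr

theorem continuousOn_cnoidalFrequency (L : ℝ) :
    ContinuousOn (cnoidalFrequency L) (Ioo (-1) 1) := by
  have := continuousOn_ellipticK
  unfold cnoidalFrequency
  fun_prop

theorem tendsto_cnoidalFrequency_nhds_one_div_sqrt_two (L : ℝ) :
    Tendsto (cnoidalFrequency L) (𝓝 (1 / √2)) (𝓝 0) := by
  have hmem : Ioo (-1) 1 ∈ 𝓝 (1 / √2) :=
    Ioo_mem_nhds (neg_one_lt_zero.trans one_div_sqrt_two_mem_Ioo.1) one_div_sqrt_two_mem_Ioo.2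
  have hzero : cnoidalFrequency L (1 / √2) = 0 := by
    simp only [cnoidalFrequency, two_mul_one_div_sqrt_two_sq, sub_self, mul_zero, zero_div]
  exact hzero ▸ (continuousOn_cnoidalFrequency L).continuousAt hmem

theorem tendsto_cnoidalFrequency_nhdsLT_one {L : ℝ} (hL : L ≠ 0) :
    Tendsto (cnoidalFrequency L) (𝓝[<] 1) atTop := by
  have hK : Tendsto (fun k ↦ ellipticK k ^ 2) (𝓝[<] 1) atTop :=
    (tendsto_pow_atTop two_ne_zero).comp tendsto_ellipticK_nhdsLT_one
  have hfactor : Tendsto (fun k : ℝ ↦ 16 * (2 * k ^ 2 - 1) / L ^ 2) (𝓝[<] 1)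
      (𝓝 (16 * (2 * 1 ^ 2 - 1) / L ^ 2)) :=
    (Continuous.tendsto (by fun_prop) 1).mono_left nhdsWithin_le_nhds
  refine (hK.atTop_mul_pos (by norm_num; positivity) hfactor).congr fun k ↦ ?_
  rw [cnoidalFrequency]
  ring

/-- the cnoidal frequency map `g(k) = 16K(k)²(2k²−1)/L²` is strictly
increasing on `(1/√2, 1)`, tends to `0` as `k → (1/√2)⁺` and to `+∞` as `k → 1⁻`, and
maps `(1/√2, 1)` bijectively onto `(0, ∞)`. -/
theorem cnoidal_frequency_map
    (L : ℝ) (hL : 0 < L)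
    (K : ℝ → ℝ)
    (hK : ∀ k : ℝ, K k = ∫ θ in (0:ℝ)..(Real.pi / 2),
      1 / Real.sqrt (1 - k ^ 2 * Real.sin θ ^ 2))
    (g : ℝ → ℝ)
    (hg : ∀ k : ℝ, g k = 16 * (K k) ^ 2 * (2 * k ^ 2 - 1) / L ^ 2) :
    StrictMonoOn g (Set.Ioo (1 / Real.sqrt 2) 1)
    ∧ Filter.Tendsto g (nhdsWithin (1 / Real.sqrt 2) (Set.Ioi (1 / Real.sqrt 2))) (nhds 0)
    ∧ Filter.Tendsto g (nhdsWithin 1 (Set.Iio 1)) Filter.atTop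
    ∧ Set.BijOn g (Set.Ioo (1 / Real.sqrt 2) 1) (Set.Ioi 0) := by
  obtain rfl : K = ellipticK := funext hK
  obtain rfl : g = cnoidalFrequency L := funext hg
  have hmono : StrictMonoOn (cnoidalFrequency L) (Ioo (1 / √2) 1) :=
    (strictMonoOn_cnoidalFrequency hL.ne').mono Ioo_subset_Ico_self
  have hcont : ContinuousOn (cnoidalFrequency L) (Ioo (1 / √2) 1) :=
    (continuousOn_cnoidalFrequency L).mono
      (Ioo_subset_Ioo_left (neg_one_lt_zero.trans one_div_sqrt_two_mem_Ioo.1).le)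
  have hzero : Tendsto (cnoidalFrequency L) (𝓝[>] (1 / √2)) (𝓝 0) :=
    (tendsto_cnoidalFrequency_nhds_one_div_sqrt_two L).mono_left nhdsWithin_le_nhds
  have htop : Tendsto (cnoidalFrequency L) (𝓝[<] 1) atTop :=
    tendsto_cnoidalFrequency_nhdsLT_one hL.ne'
  exact ⟨hmono, hzero, htop,
    bijOn_Ioo_Ioi_of_strictMonoOn one_div_sqrt_two_mem_Ioo.2 hmono hcont hzero htop⟩
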